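/- Let m>0, let k denote the continuous extension to the closed upper half-plane of the branch of √(z²−m²) with Im k(z)>0 for Im z>0, let ζ∈C_c^∞(ℝ), and fix nonnegative integers j and κ̃. For x∈ℝ set N_x(ω) = (ik(ω)·sgn x)^j · e^{ik(ω)|x|} · (−iω)^{κ̃} · ζ(ω) and Ň_x(t) = (1/2π)∫_ℝ N_x(ω)e^{−iωt}dω. Then Ň_x ∈ L¹(ℝ;ℂ) for every x, and for every R>0 there is a constant C (depending only on j, κ̃, R, m, ζ) such that sup_{|x|≤R} ‖Ň_x‖_{L¹(ℝ)} ≤ C. -/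

import Mathlib

open MeasureTheory Filter
open scoped ENNReal Topology

noncomputable section

open scoped Classical in
/-- The continuous extension to the closed upper half-plane of the branch
`k(z) = √(z²−m²)` with `Im k(z) > 0` for `Im z > 0`: in the open upper half-plane
`k(z) = i(m²−z²)^{1/2}` (principal power), and on the real axis
`k(ω) = √(ω²−m²)` for `ω ≥ m`, `k(ω) = −√(ω²−m²)` for `ω ≤ −m`,
and `k(ω) = i√(m²−ω²)` for `|ω| ≤ m`. -/
def kCl (m : ℝ) (w : ℂ) : ℂ :=
  if 0 < w.im then Complex.I * (((m:ℂ)^2 - w^2) ^ ((1:ℂ)/2))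
  else if m ≤ w.re then ((Real.sqrt (w.re^2 - m^2) : ℝ) : ℂ)
  else if w.re ≤ -m then -((Real.sqrt (w.re^2 - m^2) : ℝ) : ℂ)
  else Complex.I * ((Real.sqrt (m^2 - w.re^2) : ℝ) : ℂ)

/-! Bernstein's theorem: if `‖f(· + h) - f‖₂ = O(h ^ α)` with `α > 1 / 2`, then `𝓕 f` is integrable.
Indeed `|e ^ (2 π i h t) - 1| ≥ 1` where `1 / 4 ≤ |h t| ≤ 1 / 2`, so Plancherel bounds `𝓕 f` in `L²`
of this band of width `O(h⁻¹)`, Cauchy-Schwarz costs a factor `h ^ (-1 / 2)`, and the bounds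
`O(h ^ (α - 1 / 2))` are summed over `h = 2⁻¹ ^ n`.

On the real axis `k(ω) = √(ω - m) √(ω + m)` with the principal square root, whose increments satisfy
`|√a - √b| ≤ |a - b| ^ α |b| ^ (1 / 2 - α)` for `1 / 2 ≤ α ≤ 1`. For `α = 3 / 4` the singularities
`|ω ∓ m| ^ (-1 / 4)` are square integrable, which gives the modulus of smoothness needed for
`g(k(ω)) η(ω)`, where `g` is entire. By Cauchy's estimate the constants depend on `g` only through
its supremum on a disc, which for `g(k) = (i k sgn x) ^ j e ^ (i k |x|)` is locally bounded in `x`.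
-/

open Set
open scoped fwdDiff FourierTransform SchwartzMap RealInnerProductSpace NNReal

section Plancherel

variable {E F : Type*} [NormedAddCommGroup E] [InnerProductSpace ℝ E] [MeasurableSpace E]
  [BorelSpace E] [NormedAddCommGroup F]

theorem continuous_fourier [FiniteDimensional ℝ E] [NormedSpace ℂ F] {f : E → F}
    (hf : Integrable f) : Continuous (𝓕 f) :=
  VectorFourier.fourierIntegral_continuous Real.continuous_fourierChar
    (innerSL ℝ).continuous₂ hf

variable [FiniteDimensional ℝ E] [InnerProductSpace ℂ F] [CompleteSpace F]

theorem fourier_ae_eq_fourier_toLp {f : E → F} (hf : Integrable f) (hf' : MemLp f 2) :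
    𝓕 f =ᵐ[volume] (𝓕 (hf'.toLp f) : Lp (α := E) F 2) := by
  refine ae_eq_of_integral_contDiff_smul_eq (continuous_fourier hf).locallyIntegrable
    ((Lp.memLp _).locallyIntegrable one_le_two) fun g hg hg' => ?_
  let f₂ : Lp (α := E) F 2 := 𝓕 (hf'.toLp f)
  let φ : 𝓢(E, ℂ) := (hg'.comp_left (g := Complex.ofRealCLM) rfl).toSchwartzMap
    (Complex.ofRealCLM.contDiff.comp hg)
  calc ∫ x, g x • 𝓕 f x
      = ∫ x, φ x • 𝓕 f x := by simp [φ]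
    _ = ∫ x, 𝓕 φ x • f x := by
        have := VectorFourier.integral_fourierIntegral_smul_eq_flip (L := innerₗ E)
          Real.continuous_fourierChar (innerSL ℝ).continuous₂ (φ.integrable (μ := volume)) hf
        rw [flip_innerₗ] at this
        exact this.symm
    _ = ∫ x, 𝓕 φ x • hf'.toLp f x :=
        integral_congr_ae (by filter_upwards [hf'.coeFn_toLp] with x hx; rw [hx])
    _ = ∫ x, φ x • f₂ x := by
        simpa only [TemperedDistribution.fourier_apply, Lp.toTemperedDistribution_apply]
          using DFunLike.congr_fun (Lp.fourier_toTemperedDistribution_eq (hf'.toLp f)) φ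
    _ = ∫ x, g x • f₂ x := by simp [φ]

theorem eLpNorm_fourier_eq {f : E → F} (hf : Integrable f) (hf' : MemLp f 2) :
    eLpNorm (𝓕 f) 2 = eLpNorm f 2 := by
  rw [eLpNorm_congr_ae (fourier_ae_eq_fourier_toLp hf hf'), ← eLpNorm_congr_ae hf'.coeFn_toLp,
    ← Lp.enorm_def, ← Lp.enorm_def, ← ofReal_norm, ← ofReal_norm, Lp.norm_fourier_eq]

end Plancherel

section Bernstein

variable {F : Type*} [NormedAddCommGroup F]

theorem enorm_fourier_le [NormedSpace ℂ F] (f : ℝ → F) (t : ℝ) : ‖𝓕 f t‖ₑ ≤ eLpNorm f 1 := by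
  rw [eLpNorm_one_eq_lintegral_enorm, Real.fourier_real_eq]
  exact (enorm_integral_le_lintegral_enorm _).trans_eq
    (by simp only [← ofReal_norm, Circle.norm_smul])

theorem setLIntegral_enorm_fourier_le [NormedSpace ℂ F] (f : ℝ → F) (s : Set ℝ) :
    ∫⁻ t in s, ‖𝓕 f t‖ₑ ≤ eLpNorm f 1 * volume s :=
  (lintegral_mono (enorm_fourier_le f)).trans_eq (setLIntegral_const s _)

theorem fourier_fwdDiff [NormedSpace ℂ F] {f : ℝ → F} (hf : Integrable f) (h t : ℝ) :
    𝓕 (Δ_[h] f) t = ((𝐞 (h * t) : ℂ) - 1) • 𝓕 f t := by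
  have hshift : 𝓕 (fun x => f (x + h)) t = (𝐞 (h * t) : ℂ) • 𝓕 f t := by
    simpa [mul_comm, Function.comp_def] using! congr_fun
      (VectorFourier.fourierIntegral_comp_add_right 𝐞 volume (innerₗ ℝ) f h) t
  have hint (g : ℝ → F) (hg : Integrable g) : Integrable fun v => 𝐞 (-(v * t)) • g v := by
    simpa [mul_comm] using! (Real.fourierIntegral_convergent_iff t).2 hg
  rw [sub_smul, one_smul, ← hshift, Real.fourier_real_eq, Real.fourier_real_eq,
    Real.fourier_real_eq, ← integral_sub (hint _ (hf.comp_add_right h)) (hint _ hf)]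
  simp only [fwdDiff, smul_sub]

theorem one_le_norm_fourierChar_sub_one {x : ℝ} (hx : |x| ∈ Icc (1 / 4) (1 / 2)) :
    1 ≤ ‖(𝐞 x : ℂ) - 1‖ := by
  have hcos : Real.cos (2 * Real.pi * x) ≤ 0 := by
    rw [← Real.cos_abs, abs_mul, abs_of_pos Real.two_pi_pos]
    exact Real.cos_nonpos_of_pi_div_two_le_of_le (by nlinarith [Real.pi_pos, hx.1])
      (by nlinarith [Real.pi_pos, hx.2])
  have hre : ((𝐞 x : ℂ) - 1).re = Real.cos (2 * Real.pi * x) - 1 := by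
    rw [Real.fourierChar_apply, Complex.sub_re, Complex.exp_ofReal_mul_I_re, Complex.one_re]
  calc 1 ≤ |((𝐞 x : ℂ) - 1).re| := by rw [hre, abs_of_nonpos (by linarith)]; linarith
    _ ≤ ‖(𝐞 x : ℂ) - 1‖ := Complex.abs_re_le_norm _

/-- The frequency band `1 / 4 ≤ h |t| ≤ 1 / 2`, on which the symbol `e ^ (2 π i h t) - 1` of the
difference operator `Δ_[h]` is bounded below. -/
def freqBand (h : ℝ) : Set ℝ := {t | |h * t| ∈ Icc (1 / 4) (1 / 2)}

theorem measurableSet_freqBand (h : ℝ) : MeasurableSet (freqBand h) :=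
  (by fun_prop : Measurable fun t : ℝ => |h * t|) measurableSet_Icc

theorem volume_freqBand_le {h : ℝ} (hh : 0 < h) : volume (freqBand h) ≤ ENNReal.ofReal h⁻¹ := by
  calc volume (freqBand h) ≤ volume (Icc (-(h⁻¹ / 2)) (h⁻¹ / 2)) := by
        refine measure_mono fun t ht => abs_le.1 ?_
        have := ht.2
        rw [abs_mul, abs_of_pos hh] at this
        rw [← mul_le_mul_iff_right₀ hh]
        field_simp
        linarith
    _ = ENNReal.ofReal h⁻¹ := by rw [Real.volume_Icc]; ring_nf

variable [InnerProductSpace ℂ F] [CompleteSpace F]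

theorem eLpNorm_fourier_freqBand_le {f : ℝ → F} (hf : Integrable f) (hf' : MemLp f 2) {h : ℝ}
    (hh : 0 < h) : eLpNorm (𝓕 f) 1 (volume.restrict (freqBand h)) ≤
      eLpNorm (Δ_[h] f) 2 * ENNReal.ofReal (h ^ (-(1 / 2) : ℝ)) := by
  have hdiff : Integrable (Δ_[h] f) := (hf.comp_add_right h).sub hf
  have hdiff' : MemLp (Δ_[h] f) 2 :=
    (hf'.comp_measurePreserving (measurePreserving_add_right volume h)).sub hf'
  have hmono : eLpNorm (𝓕 f) 2 (volume.restrict (freqBand h)) ≤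
      eLpNorm (𝓕 (Δ_[h] f)) 2 (volume.restrict (freqBand h)) := by
    refine eLpNorm_mono_ae ((ae_restrict_iff' (measurableSet_freqBand h)).2 ?_)
    refine .of_forall fun t ht => ?_
    rw [fourier_fwdDiff hf, norm_smul]
    exact le_mul_of_one_le_left (norm_nonneg _) (one_le_norm_fourierChar_sub_one ht)
  have hL2 : eLpNorm (𝓕 f) 2 (volume.restrict (freqBand h)) ≤ eLpNorm (Δ_[h] f) 2 :=
    (hmono.trans (eLpNorm_restrict_le ..)).trans_eq (eLpNorm_fourier_eq hdiff hdiff')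
  have hvol : (volume (freqBand h)) ^ (1 / 2 : ℝ) ≤ ENNReal.ofReal (h ^ (-(1 / 2) : ℝ)) := by
    rw [Real.rpow_neg hh.le, ← Real.inv_rpow hh.le,
      ← ENNReal.ofReal_rpow_of_nonneg (inv_nonneg.2 hh.le) (by norm_num)]
    gcongr
    exact volume_freqBand_le hh
  have hHolder := eLpNorm_le_eLpNorm_mul_rpow_measure_univ (μ := volume.restrict (freqBand h))
    one_le_two (continuous_fourier hf).aestronglyMeasurable
  have hexponent : 1 / (1 : ℝ≥0∞).toReal - 1 / (2 : ℝ≥0∞).toReal = 1 / 2 := by norm_num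
  rw [hexponent, Measure.restrict_apply_univ] at hHolder
  exact hHolder.trans (by gcongr)

theorem Icc_union_iUnion_freqBand :
    Icc (-(1 / 4)) (1 / 4) ∪ ⋃ n : ℕ, freqBand (2⁻¹ ^ n) = univ := by
  refine eq_univ_of_forall fun t => ?_
  rcases le_total |t| (1 / 4) with ht | ht
  · exact .inl (abs_le.1 ht)
  · obtain ⟨n, hn, hn'⟩ := exists_nat_pow_near (by linarith : 1 ≤ 4 * |t|) one_lt_two
    refine .inr (mem_iUnion.2 ⟨n, ?_⟩)
    rw [freqBand, mem_ofPred_eq, abs_mul, abs_of_pos (by positivity), inv_pow, mem_Icc]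
    constructor <;> field_simp <;> first | linarith | (rw [pow_succ] at hn'; linarith)

theorem eLpNorm_fourier_one_le {f : ℝ → F} (hf : Integrable f) (hf' : MemLp f 2) {α : ℝ} {C : ℝ≥0∞}
    (hC : ∀ h ∈ Ioc (0 : ℝ) 1, eLpNorm (Δ_[h] f) 2 ≤ C * ENNReal.ofReal (h ^ α)) :
    eLpNorm (𝓕 f) 1 ≤
      eLpNorm f 1 + C * (1 - ENNReal.ofReal (2⁻¹ ^ (α - 1 / 2)))⁻¹ := by
  have hlow : ∫⁻ t in Icc (-(1 / 4)) (1 / 4), ‖𝓕 f t‖ₑ ≤ eLpNorm f 1 :=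
    (setLIntegral_enorm_fourier_le f _).trans
      (mul_le_of_le_one_right' (by rw [Real.volume_Icc]; norm_num))
  have hband (n : ℕ) : ∫⁻ t in freqBand (2⁻¹ ^ n), ‖𝓕 f t‖ₑ ≤
      C * ENNReal.ofReal (2⁻¹ ^ (α - 1 / 2)) ^ n := by
    have hpos : (0 : ℝ) < 2⁻¹ ^ n := by positivity
    calc ∫⁻ t in freqBand (2⁻¹ ^ n), ‖𝓕 f t‖ₑ
        ≤ eLpNorm (Δ_[2⁻¹ ^ n] f) 2 * ENNReal.ofReal ((2⁻¹ ^ n) ^ (-(1 / 2) : ℝ)) := by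
          rw [← eLpNorm_one_eq_lintegral_enorm]
          exact eLpNorm_fourier_freqBand_le hf hf' hpos
      _ ≤ C * ENNReal.ofReal ((2⁻¹ ^ n) ^ α) * ENNReal.ofReal ((2⁻¹ ^ n) ^ (-(1 / 2) : ℝ)) := by
          gcongr
          exact hC _ ⟨hpos, pow_le_one₀ (by norm_num) (by norm_num)⟩
      _ = C * ENNReal.ofReal (2⁻¹ ^ (α - 1 / 2)) ^ n := by
          rw [mul_assoc, ← ENNReal.ofReal_mul (by positivity), ← Real.rpow_add hpos,
            ← ENNReal.ofReal_pow (by positivity), ← sub_eq_add_neg,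
            ← Real.rpow_pow_comm (by norm_num)]
  rw [eLpNorm_one_eq_lintegral_enorm, ← setLIntegral_univ, ← Icc_union_iUnion_freqBand,
    ← ENNReal.tsum_geometric, ← ENNReal.tsum_mul_left]
  exact (lintegral_union_le _ _ _).trans
    (add_le_add hlow ((lintegral_iUnion_le _ _).trans (ENNReal.tsum_le_tsum hband)))

end Bernstein

section SquareRoot

theorem norm_sub_le_norm_add_of_inner_nonneg {E : Type*} [NormedAddCommGroup E]
    [InnerProductSpace ℝ E] {x y : E} (h : 0 ≤ ⟪x, y⟫) : ‖x - y‖ ≤ ‖x + y‖ := by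
  rw [← sq_le_sq₀ (norm_nonneg _) (norm_nonneg _), norm_sub_sq_real, norm_add_sq_real]
  linarith

theorem norm_le_norm_add_of_inner_nonneg {E : Type*} [NormedAddCommGroup E]
    [InnerProductSpace ℝ E] {x y : E} (h : 0 ≤ ⟪x, y⟫) : ‖y‖ ≤ ‖x + y‖ := by
  rw [← sq_le_sq₀ (norm_nonneg _) (norm_nonneg _), norm_add_sq_real]
  linarith [sq_nonneg ‖x‖]

theorem complexSqrt_sq (z : ℂ) : z.sqrt ^ 2 = z := by
  exact_mod_cast Complex.cpow_nat_inv_pow z two_ne_zero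

theorem norm_complexSqrt (z : ℂ) : ‖z.sqrt‖ = √‖z‖ := by
  rw [eq_comm, Real.sqrt_eq_iff_eq_sq (norm_nonneg _) (norm_nonneg _), ← norm_pow, complexSqrt_sq]

theorem complexSqrt_ofReal (x : ℝ) :
    (x : ℂ).sqrt = √x + √(-x) * Complex.I := by
  rcases le_total 0 x with hx | hx
  · simp [Complex.sqrt_eq_real_add_ite, abs_of_nonneg hx,
      Real.sqrt_eq_zero_of_nonpos (neg_nonpos.2 hx)]
  · have hneg : (-x - x) / 2 = -x := by ring
    simp [Complex.sqrt_eq_real_add_ite, abs_of_nonpos hx, Real.sqrt_eq_zero_of_nonpos hx, hneg]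

theorem continuous_complexSqrt_ofReal : Continuous fun x : ℝ => (x : ℂ).sqrt := by
  simp only [complexSqrt_ofReal]
  fun_prop

theorem norm_complexSqrt_ofReal_le {x L : ℝ} (hx : |x| ≤ L) : ‖(x : ℂ).sqrt‖ ≤ √L := by
  rw [norm_complexSqrt, Complex.norm_real, Real.norm_eq_abs]
  gcongr

variable (a b : ℝ)

theorem inner_complexSqrt_ofReal_nonneg : 0 ≤ ⟪(a : ℂ).sqrt, (b : ℂ).sqrt⟫ := by
  have (x : ℝ) : 0 ≤ (x : ℂ).sqrt.re ∧ 0 ≤ (x : ℂ).sqrt.im := by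
    rw [complexSqrt_ofReal]
    constructor <;> simp
  obtain ⟨⟨ha, ha'⟩, hb, hb'⟩ := And.intro (this a) (this b)
  rw [Complex.inner, Complex.mul_re, Complex.conj_re, Complex.conj_im, mul_neg, sub_neg_eq_add]
  positivity

theorem norm_complexSqrt_ofReal_sub_mul_norm_add :
    ‖(a : ℂ).sqrt - (b : ℂ).sqrt‖ * ‖(a : ℂ).sqrt + (b : ℂ).sqrt‖ = |a - b| := by
  rw [← norm_mul, mul_comm, ← sq_sub_sq, complexSqrt_sq, complexSqrt_sq, ← Complex.ofReal_sub,
    Complex.norm_real, Real.norm_eq_abs]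

theorem norm_complexSqrt_ofReal_sub_le_sqrt : ‖(a : ℂ).sqrt - (b : ℂ).sqrt‖ ≤ √|a - b| := by
  refine Real.le_sqrt_of_sq_le ?_
  rw [← norm_complexSqrt_ofReal_sub_mul_norm_add, sq]
  gcongr
  exact norm_sub_le_norm_add_of_inner_nonneg (inner_complexSqrt_ofReal_nonneg a b)

theorem norm_complexSqrt_ofReal_sub_mul_sqrt_le :
    ‖(a : ℂ).sqrt - (b : ℂ).sqrt‖ * √|b| ≤ |a - b| := by
  rw [← norm_complexSqrt_ofReal_sub_mul_norm_add, ← Real.norm_eq_abs, ← Complex.norm_real,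
    ← norm_complexSqrt]
  gcongr
  exact norm_le_norm_add_of_inner_nonneg (inner_complexSqrt_ofReal_nonneg a b)

variable {a b}

theorem norm_complexSqrt_ofReal_sub_le_rpow_mul_rpow (hb : b ≠ 0) {α : ℝ} (hα : α ∈ Icc (1 / 2) 1) :
    ‖(a : ℂ).sqrt - (b : ℂ).sqrt‖ ≤ |a - b| ^ α * |b| ^ (1 / 2 - α) := by
  have hb' : 0 < |b| := abs_pos.2 hb
  have hlip : ‖(a : ℂ).sqrt - (b : ℂ).sqrt‖ ≤ |a - b| / √|b| :=
    (le_div_iff₀ (Real.sqrt_pos.2 hb')).2 (norm_complexSqrt_ofReal_sub_mul_sqrt_le a b)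
  calc ‖(a : ℂ).sqrt - (b : ℂ).sqrt‖
      = ‖(a : ℂ).sqrt - (b : ℂ).sqrt‖ ^ (2 * (1 - α)) *
          ‖(a : ℂ).sqrt - (b : ℂ).sqrt‖ ^ (2 * α - 1) := by
        rw [← Real.rpow_add_of_nonneg (norm_nonneg _) (by linarith [hα.2]) (by linarith [hα.1])]
        ring_nf
        rw [Real.rpow_one]
    _ ≤ √|a - b| ^ (2 * (1 - α)) * (|a - b| / √|b|) ^ (2 * α - 1) := by
        gcongr
        · linarith [hα.2]
        · exact norm_complexSqrt_ofReal_sub_le_sqrt a b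
        · linarith [hα.1]
    _ = |a - b| ^ α * |b| ^ (1 / 2 - α) := by
        rw [Real.div_rpow (abs_nonneg _) (Real.sqrt_nonneg _), Real.sqrt_eq_rpow, Real.sqrt_eq_rpow,
          ← Real.rpow_mul (abs_nonneg _), ← Real.rpow_mul (abs_nonneg _), mul_div_assoc',
          ← Real.rpow_add_of_nonneg (abs_nonneg _) (by linarith [hα.2]) (by linarith [hα.1]),
          div_eq_mul_inv, ← Real.rpow_neg (abs_nonneg _)]
        ring_nf

end SquareRoot

section WaveNumber

variable {m : ℝ}

theorem kCl_ofReal (hm : 0 ≤ m) (ω : ℝ) :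
    kCl m ω = ((ω - m : ℝ) : ℂ).sqrt * ((ω + m : ℝ) : ℂ).sqrt := by
  have hpos (x : ℝ) (hx : 0 ≤ x) : (x : ℂ).sqrt = √x := by
    simp [complexSqrt_ofReal, Real.sqrt_eq_zero_of_nonpos (neg_nonpos.2 hx)]
  have hneg (x : ℝ) (hx : x ≤ 0) : (x : ℂ).sqrt = √(-x) * Complex.I := by
    simp [complexSqrt_ofReal, Real.sqrt_eq_zero_of_nonpos hx]
  simp only [kCl, Complex.ofReal_im, lt_self_iff_false, ↓reduceIte, Complex.ofReal_re]
  split_ifs with h₁ h₂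
  · rw [hpos _ (by linarith), hpos _ (by linarith), ← Complex.ofReal_mul,
      ← Real.sqrt_mul (by linarith)]
    ring_nf
  · rw [hneg _ (by linarith), hneg _ (by linarith), mul_mul_mul_comm, ← Complex.ofReal_mul,
      ← Real.sqrt_mul (by linarith), Complex.I_mul_I]
    ring_nf
  · rw [hneg _ (by linarith), hpos _ (by linarith), mul_right_comm, ← Complex.ofReal_mul,
      ← Real.sqrt_mul (by linarith)]
    ring_nf

theorem continuous_kCl_ofReal (hm : 0 ≤ m) : Continuous fun ω : ℝ => kCl m ω := by
  simp only [kCl_ofReal hm]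
  exact (continuous_complexSqrt_ofReal.comp (continuous_sub_right m)).mul
    (continuous_complexSqrt_ofReal.comp (continuous_add_const m))

variable {L a b : ℝ}

theorem abs_sub_le_add_of_abs_le (hm : 0 ≤ m) (ha : |a| ≤ L) : |a - m| ≤ L + m := by
  rw [abs_le] at *
  constructor <;> linarith [ha.1, ha.2]

theorem abs_add_le_add_of_abs_le (hm : 0 ≤ m) (ha : |a| ≤ L) : |a + m| ≤ L + m := by
  rw [abs_le] at *
  constructor <;> linarith [ha.1, ha.2]

theorem norm_kCl_ofReal_le (hm : 0 ≤ m) (ha : |a| ≤ L) : ‖kCl m a‖ ≤ L + m := by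
  have hL : 0 ≤ L + m := by linarith [abs_nonneg a]
  rw [kCl_ofReal hm, norm_mul, ← Real.mul_self_sqrt hL]
  exact mul_le_mul (norm_complexSqrt_ofReal_le (abs_sub_le_add_of_abs_le hm ha))
    (norm_complexSqrt_ofReal_le (abs_add_le_add_of_abs_le hm ha)) (norm_nonneg _)
    (Real.sqrt_nonneg _)

theorem norm_kCl_ofReal_sub_le (hm : 0 ≤ m) (ha : |a| ≤ L) (hb : |b| ≤ L) (hbm : b ≠ m)
    (hbm' : b ≠ -m) {α : ℝ} (hα : α ∈ Icc (1 / 2) 1) :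
    ‖kCl m a - kCl m b‖ ≤
      |a - b| ^ α * (√(L + m) * (|b - m| ^ (1 / 2 - α) + |b + m| ^ (1 / 2 - α))) := by
  have hminus := norm_complexSqrt_ofReal_sub_le_rpow_mul_rpow (a := a - m) (sub_ne_zero.2 hbm) hα
  have hplus := norm_complexSqrt_ofReal_sub_le_rpow_mul_rpow (a := a + m)
    (mt eq_neg_of_add_eq_zero_left hbm') hα
  rw [sub_sub_sub_cancel_right] at hminus
  rw [add_sub_add_right_eq_sub] at hplus
  calc ‖kCl m a - kCl m b‖
      = ‖(((a - m : ℝ) : ℂ).sqrt - ((b - m : ℝ) : ℂ).sqrt) * ((a + m : ℝ) : ℂ).sqrt +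
          ((b - m : ℝ) : ℂ).sqrt * (((a + m : ℝ) : ℂ).sqrt - ((b + m : ℝ) : ℂ).sqrt)‖ := by
        rw [kCl_ofReal hm, kCl_ofReal hm]
        ring_nf
    _ ≤ |a - b| ^ α * |b - m| ^ (1 / 2 - α) * √(L + m) +
          √(L + m) * (|a - b| ^ α * |b + m| ^ (1 / 2 - α)) := by
        refine norm_add_le_of_le ?_ ?_ <;> rw [norm_mul]
        · gcongr
          exact norm_complexSqrt_ofReal_le (abs_add_le_add_of_abs_le hm ha)
        · gcongr
          exact norm_complexSqrt_ofReal_le (abs_sub_le_add_of_abs_le hm hb)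
    _ = |a - b| ^ α * (√(L + m) * (|b - m| ^ (1 / 2 - α) + |b + m| ^ (1 / 2 - α))) := by ring

end WaveNumber

section Symbol

theorem locallyIntegrable_abs_sub_rpow {s : ℝ} (hs : -1 < s) (c : ℝ) :
    LocallyIntegrable fun x : ℝ => |x - c| ^ s := by
  have hcentred : LocallyIntegrable fun x : ℝ => |x| ^ s :=
    locallyIntegrable_of_norm_le_rpow (C := 1) (α := -s) (by simp) (by simpa using by linarith)
      (.of_forall fun x => by
        rw [one_mul, neg_neg, Real.norm_of_nonneg (by positivity), Real.norm_eq_abs])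
      (Measurable.aestronglyMeasurable (by fun_prop))
  rw [← (measurePreserving_sub_right volume c).map_eq] at hcentred
  exact (locallyIntegrable_map_homeomorph (Homeomorph.subRight c)).1 hcentred

theorem memLp_two_restrict_abs_sub_rpow {s : ℝ} (hs : -(1 / 2) < s) (c : ℝ) {K : Set ℝ}
    (hK : IsCompact K) : MemLp (fun x : ℝ => |x - c| ^ s) 2 (volume.restrict K) := by
  rw [memLp_two_iff_integrable_sq (Measurable.aestronglyMeasurable (by fun_prop))]
  have hsq (x : ℝ) : (|x - c| ^ s) ^ 2 = |x - c| ^ (s * 2) := by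
    rw [Real.rpow_mul (abs_nonneg _), Real.rpow_two]
  simp only [hsq]
  exact (locallyIntegrable_abs_sub_rpow (by linarith) c).integrableOn_isCompact hK

theorem lipschitzOnWith_of_norm_le_on_closedBall {F : Type*} [NormedAddCommGroup F]
    [NormedSpace ℂ F] {g : ℂ → F} (hg : Differentiable ℂ g) {r : ℝ} {N : ℝ≥0}
    (hN : ∀ z, ‖z‖ ≤ r + 1 → ‖g z‖ ≤ N) : LipschitzOnWith N g (Metric.closedBall 0 r) := by
  refine Convex.lipschitzOnWith_of_nnnorm_deriv_le (fun z _ => hg z) (fun z hz => ?_)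
    (convex_closedBall 0 r)
  rw [mem_closedBall_zero_iff] at hz
  have hcauchy : ‖deriv g z‖ ≤ N / 1 :=
    Complex.norm_deriv_le_of_forall_mem_sphere_norm_le one_pos hg.diffContOnCl fun w hw =>
      hN w ((norm_le_of_mem_closedBall (Metric.sphere_subset_closedBall hw)).trans (by gcongr))
  rwa [div_one] at hcauchy

theorem fwdDiff_eq_zero_of_notMem_Icc {F : Type*} [AddCommGroup F] {f : ℝ → F} {B h b : ℝ}
    (hf : tsupport f ⊆ Icc (-B) B) (hh : h ∈ Ioc 0 1) (hb : b ∉ Icc (-(B + 1)) (B + 1)) :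
    Δ_[h] f b = 0 := by
  have hzero (a : ℝ) (ha : a ∉ Icc (-B) B) : f a = 0 :=
    image_eq_zero_of_notMem_tsupport (mt (@hf a) ha)
  rw [fwdDiff, hzero b fun hb' => hb ?_, hzero (b + h) fun hb' => hb ?_, sub_zero]
  · exact ⟨by linarith [hb'.1, hh.2], by linarith [hb'.2, hh.1]⟩
  · exact ⟨by linarith [hb'.1], by linarith [hb'.2]⟩

variable {m : ℝ}

theorem norm_comp_kCl_mul_sub_le (hm : 0 ≤ m) {η : ℝ → ℂ} {g : ℂ → ℂ} {L M : ℝ} {K N : ℝ≥0}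
    (hM : ∀ ω, ‖η ω‖ ≤ M) (hK : LipschitzOnWith K η (Icc (-L) L))
    (hg : Differentiable ℂ g) (hN : ∀ z, ‖z‖ ≤ L + m + 1 → ‖g z‖ ≤ N) {a b : ℝ} (ha : |a| ≤ L)
    (hb : |b| ≤ L) (hab : |a - b| ≤ 1) (hbm : b ≠ m) (hbm' : b ≠ -m) {α : ℝ}
    (hα : α ∈ Icc (1 / 2) 1) :
    ‖g (kCl m a) * η a - g (kCl m b) * η b‖ ≤ |a - b| ^ α *
      (N * (M * (√(L + m) * (|b - m| ^ (1 / 2 - α) + |b + m| ^ (1 / 2 - α))) + K)) := by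
  have hka := norm_kCl_ofReal_le hm ha
  have hkb := norm_kCl_ofReal_le hm hb
  have hgsub : ‖g (kCl m a) - g (kCl m b)‖ ≤ N * ‖kCl m a - kCl m b‖ :=
    (lipschitzOnWith_of_norm_le_on_closedBall hg hN).norm_sub_le
      (mem_closedBall_zero_iff.2 hka) (mem_closedBall_zero_iff.2 hkb)
  have hηsub : ‖η a - η b‖ ≤ K * |a - b| := hK.norm_sub_le (abs_le.1 ha) (abs_le.1 hb)
  have hpow : |a - b| ≤ |a - b| ^ α := by
    simpa using Real.rpow_le_rpow_of_exponent_ge' (abs_nonneg (a - b)) hab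
      (by linarith [hα.1]) hα.2
  calc ‖g (kCl m a) * η a - g (kCl m b) * η b‖
      = ‖(g (kCl m a) - g (kCl m b)) * η a + g (kCl m b) * (η a - η b)‖ := by ring_nf
    _ ≤ N * (|a - b| ^ α * (√(L + m) * (|b - m| ^ (1 / 2 - α) + |b + m| ^ (1 / 2 - α)))) * M +
          N * (K * |a - b| ^ α) := by
        refine norm_add_le_of_le ?_ ?_ <;> rw [norm_mul]
        · gcongr
          · exact hgsub.trans (by gcongr; exact norm_kCl_ofReal_sub_le hm ha hb hbm hbm' hα)
          · exact hM a
        · gcongr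
          · exact hN _ (by linarith)
          · exact hηsub.trans (by gcongr)
    _ = _ := by ring

variable {η : ℝ → ℂ}

theorem exists_memLp_two_norm_fwdDiff_comp_kCl_mul_le (hm : 0 ≤ m) (hη : LocallyLipschitz η)
    (hη' : HasCompactSupport η) {α : ℝ} (hα : α ∈ Ico (1 / 2) 1) :
    ∃ (r : ℝ) (W : ℝ → ℝ), MemLp W 2 ∧ ∀ (g : ℂ → ℂ) (N : ℝ≥0), Differentiable ℂ g →
      (∀ z, ‖z‖ ≤ r → ‖g z‖ ≤ N) → ∀ h ∈ Ioc (0 : ℝ) 1,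
      ∀ᵐ b, ‖Δ_[h] (fun ω : ℝ => g (kCl m ω) * η ω) b‖ ≤ h ^ α * N * ‖W b‖ := by
  obtain ⟨B, hB⟩ := hη'.isCompact.isBounded.exists_norm_le
  obtain ⟨M, hM⟩ := hη'.exists_bound_of_continuous hη.continuous
  obtain ⟨K, hK⟩ := (hη.locallyLipschitzOn (s := Icc (-(B + 2)) (B + 2)))
    |>.exists_lipschitzOnWith_of_compact isCompact_Icc
  let w (b : ℝ) : ℝ := M * (√(B + 2 + m) * (|b - m| ^ (1 / 2 - α) + |b + m| ^ (1 / 2 - α))) + K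
  refine ⟨B + 2 + m + 1, (Icc (-(B + 1)) (B + 1)).indicator w, ?_, fun g N hg hN h hh => ?_⟩
  · have hsing (c : ℝ) : MemLp (fun b : ℝ => |b - c| ^ (1 / 2 - α)) 2
        (volume.restrict (Icc (-(B + 1)) (B + 1))) :=
      memLp_two_restrict_abs_sub_rpow (by linarith [hα.2]) c isCompact_Icc
    refine (memLp_indicator_iff_restrict measurableSet_Icc).2 ((MemLp.const_mul
      (.const_mul ((hsing m).add ?_) _) _).add (memLp_const _))
    simpa only [sub_neg_eq_add] using hsing (-m)
  · filter_upwards [Measure.ae_ne volume m, Measure.ae_ne volume (-m)] with b hbm hbm'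
    by_cases hb : b ∈ Icc (-(B + 1)) (B + 1)
    · have hb' : |b| ≤ B + 1 := abs_le.2 hb
      have hsub : |b + h - b| = h := by rw [add_sub_cancel_left, abs_of_pos hh.1]
      have hbh : |b + h| ≤ B + 2 :=
        (abs_add_le _ _).trans (by rw [abs_of_pos hh.1]; linarith [hh.2])
      have hbound := norm_comp_kCl_mul_sub_le hm hM hK hg hN hbh (by linarith)
        (hsub.trans_le hh.2) hbm hbm' ⟨hα.1, hα.2.le⟩
      rw [hsub, ← mul_assoc] at hbound
      rw [indicator_of_mem hb]
      have hα0 : 0 ≤ h ^ α := Real.rpow_nonneg hh.1.le α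
      exact hbound.trans (by gcongr; exact Real.le_norm_self _)
    · have hsupp : tsupport (fun ω : ℝ => g (kCl m ω) * η ω) ⊆ Icc (-B) B := fun ω hω =>
        abs_le.1 (hB ω (tsupport_mul_subset_right hω))
      rw [fwdDiff_eq_zero_of_notMem_Icc hsupp hh hb, norm_zero]
      have := hh.1
      positivity

theorem exists_eLpNorm_fwdDiff_comp_kCl_mul_le (hm : 0 ≤ m) (hη : LocallyLipschitz η)
    (hη' : HasCompactSupport η) {α : ℝ} (hα : α ∈ Ico (1 / 2) 1) :
    ∃ (r : ℝ) (C : ℝ≥0∞), C ≠ ∞ ∧ ∀ (g : ℂ → ℂ) (N : ℝ≥0), Differentiable ℂ g →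
      (∀ z, ‖z‖ ≤ r → ‖g z‖ ≤ N) → ∀ h ∈ Ioc (0 : ℝ) 1,
      eLpNorm (Δ_[h] fun ω : ℝ => g (kCl m ω) * η ω) 2 ≤ N * C * ENNReal.ofReal (h ^ α) := by
  obtain ⟨r, W, hW, hdiff⟩ := exists_memLp_two_norm_fwdDiff_comp_kCl_mul_le hm hη hη' hα
  refine ⟨r, eLpNorm W 2 volume, hW.eLpNorm_ne_top, fun g N hg hN h hh => ?_⟩
  rw [mul_comm (_ * _), ← mul_assoc, ← ENNReal.ofReal_coe_nnreal,
    ← ENNReal.ofReal_mul (Real.rpow_nonneg hh.1.le _)]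
  exact eLpNorm_le_mul_eLpNorm_of_ae_le_mul (hdiff g N hg hN h hh) _

theorem exists_eLpNorm_comp_kCl_mul_le (hm : 0 ≤ m) (hη : Continuous η)
    (hη' : HasCompactSupport η) :
    ∃ (r : ℝ) (C : ℝ≥0∞), C ≠ ∞ ∧ ∀ (g : ℂ → ℂ) (N : ℝ≥0),
      (∀ z, ‖z‖ ≤ r → ‖g z‖ ≤ N) → eLpNorm (fun ω : ℝ => g (kCl m ω) * η ω) 1 ≤ N * C := by
  obtain ⟨B, hB⟩ := hη'.isCompact.isBounded.exists_norm_le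
  have hη1 : MemLp η 1 := hη.memLp_of_hasCompactSupport hη'
  refine ⟨B + m, eLpNorm η 1 volume, hη1.eLpNorm_ne_top, fun g N hN => ?_⟩
  rw [← ENNReal.ofReal_coe_nnreal]
  refine eLpNorm_le_mul_eLpNorm_of_ae_le_mul (.of_forall fun ω => ?_) _
  by_cases hω : ω ∈ tsupport η
  · rw [norm_mul]
    gcongr
    exact hN _ (norm_kCl_ofReal_le hm (hB ω hω))
  · simp only [image_eq_zero_of_notMem_tsupport hω, mul_zero, norm_zero, le_refl]

theorem exists_eLpNorm_fourier_comp_kCl_mul_le (hm : 0 ≤ m) (hη : LocallyLipschitz η)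
    (hη' : HasCompactSupport η) :
    ∃ (r : ℝ) (C : ℝ≥0∞), C ≠ ∞ ∧ ∀ (g : ℂ → ℂ) (N : ℝ≥0), Differentiable ℂ g →
      (∀ z, ‖z‖ ≤ r → ‖g z‖ ≤ N) → eLpNorm (𝓕 fun ω : ℝ => g (kCl m ω) * η ω) 1 ≤ N * C := by
  obtain ⟨r₁, C₁, hC₁, hL1⟩ := exists_eLpNorm_comp_kCl_mul_le hm hη.continuous hη'
  obtain ⟨r₂, C₂, hC₂, hL2⟩ := exists_eLpNorm_fwdDiff_comp_kCl_mul_le hm hη hη'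
    (α := 3 / 4) (by norm_num)
  have hratio : ENNReal.ofReal (2⁻¹ ^ (3 / 4 - 1 / 2 : ℝ)) < 1 := by
    rw [ENNReal.ofReal_lt_one]
    exact Real.rpow_lt_one (by norm_num) (by norm_num) (by norm_num)
  refine ⟨max r₁ r₂, C₁ + C₂ * (1 - ENNReal.ofReal (2⁻¹ ^ (3 / 4 - 1 / 2 : ℝ)))⁻¹, ?_,
    fun g N hg hN => ?_⟩
  · exact ENNReal.add_ne_top.2 ⟨hC₁, ENNReal.mul_ne_top hC₂
      (ENNReal.inv_ne_top.2 (tsub_pos_of_lt hratio).ne')⟩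
  · have hcont : Continuous fun ω : ℝ => g (kCl m ω) * η ω :=
      (hg.continuous.comp (continuous_kCl_ofReal hm)).mul hη.continuous
    have hsupp : HasCompactSupport fun ω : ℝ => g (kCl m ω) * η ω := hη'.mul_left
    refine (eLpNorm_fourier_one_le (hcont.integrable_of_hasCompactSupport hsupp)
      (hcont.memLp_of_hasCompactSupport hsupp)
      (hL2 g N hg fun z hz => hN z (hz.trans (le_max_right _ _)))).trans ?_
    rw [mul_add, mul_assoc]
    gcongr
    exact hL1 g N fun z hz => hN z (hz.trans (le_max_left _ _))

end Symbol

section Kernel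

/-- The transform `f ↦ f̌` of the paper, in angular frequency and with the factor `1 / 2π`;
Mathlib's `𝓕` uses `e ^ (-2 π i ω t)` instead. -/
def angularFourier (f : ℝ → ℂ) (t : ℝ) : ℂ :=
  ((1 / (2 * Real.pi) : ℝ) : ℂ) * ∫ ω : ℝ, f ω * Complex.exp (-Complex.I * ω * t)

theorem angularFourier_eq (f : ℝ → ℂ) (t : ℝ) :
    angularFourier f t = ((1 / (2 * Real.pi) : ℝ) : ℂ) * 𝓕 f (t / (2 * Real.pi)) := by
  have hexp (ω : ℝ) : ((-2 * Real.pi * ω * (t / (2 * Real.pi)) : ℝ) : ℂ) * Complex.I =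
      -Complex.I * ω * t := by
    push_cast
    field_simp
  simp only [angularFourier, Real.fourier_real_eq_integral_exp_smul, hexp, smul_eq_mul,
    mul_comm (f _)]

theorem integrable_angularFourier {f : ℝ → ℂ} (hf : Integrable (𝓕 f)) :
    Integrable (angularFourier f) := by
  simp only [funext (angularFourier_eq f)]
  exact (hf.comp_div Real.two_pi_pos.ne').const_mul _

theorem integral_norm_angularFourier (f : ℝ → ℂ) :
    ∫ t, ‖angularFourier f t‖ = ∫ t, ‖𝓕 f t‖ := by
  simp only [angularFourier_eq, norm_mul, Complex.norm_real, integral_const_mul]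
  rw [Measure.integral_comp_div (fun t => ‖𝓕 f t‖), smul_eq_mul, ← mul_assoc, Real.norm_eq_abs,
    ← abs_mul, one_div_mul_cancel Real.two_pi_pos.ne', abs_one, one_mul]

theorem integrable_angularFourier_and_integral_norm_le {f : ℝ → ℂ} (hf : Integrable f) {C : ℝ≥0∞}
    (hC : C ≠ ∞) (h : eLpNorm (𝓕 f) 1 ≤ C) :
    Integrable (angularFourier f) ∧ ∫ t, ‖angularFourier f t‖ ≤ C.toReal := by
  have hint : Integrable (𝓕 f) := memLp_one_iff_integrable.1
    ⟨(continuous_fourier hf).aestronglyMeasurable, h.trans_lt hC.lt_top⟩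
  refine ⟨integrable_angularFourier hint, ?_⟩
  rw [integral_norm_angularFourier, integral_norm_eq_lintegral_enorm hint.1,
    ← eLpNorm_one_eq_lintegral_enorm]
  exact ENNReal.toReal_mono hC h

/-- The spatial factor `(i k sgn x) ^ j * e ^ (i k |x|)` of the multiplicator `N_x`, as an entire
function of the wave number `k`. -/
def spatialFactor (j : ℕ) (x : ℝ) (k : ℂ) : ℂ :=
  (Complex.I * k * (Real.sign x : ℝ)) ^ j * Complex.exp (Complex.I * k * (|x| : ℝ))

theorem differentiable_spatialFactor (j : ℕ) (x : ℝ) : Differentiable ℂ (spatialFactor j x) := by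
  unfold spatialFactor
  fun_prop

theorem norm_spatialFactor_le (j : ℕ) {x R r : ℝ} (hx : |x| ≤ R) {k : ℂ} (hk : ‖k‖ ≤ r) :
    ‖spatialFactor j x k‖ ≤ r ^ j * Real.exp (r * R) := by
  have hr : 0 ≤ r := (norm_nonneg k).trans hk
  have hsign : ‖((Real.sign x : ℝ) : ℂ)‖ ≤ 1 := by
    rcases Real.sign_apply_eq x with h | h | h <;> simp [h]
  rw [spatialFactor, norm_mul, norm_pow]
  gcongr
  · rw [norm_mul, norm_mul, Complex.norm_I, one_mul]
    exact (mul_le_of_le_one_right (norm_nonneg k) hsign).trans hk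
  · refine (Complex.norm_exp_le_exp_norm _).trans (Real.exp_le_exp.2 ?_)
    rw [norm_mul, norm_mul, Complex.norm_I, one_mul, Complex.norm_real, Real.norm_eq_abs, abs_abs]
    gcongr

theorem exists_integral_norm_angularFourier_spatialFactor_le {m : ℝ} (hm : 0 ≤ m) {η : ℝ → ℂ}
    (hη : LocallyLipschitz η) (hη' : HasCompactSupport η) (j : ℕ) (R : ℝ) :
    ∃ C : ℝ, ∀ x : ℝ, |x| ≤ R →
      Integrable (angularFourier fun ω => spatialFactor j x (kCl m ω) * η ω) ∧
      ∫ t, ‖angularFourier (fun ω => spatialFactor j x (kCl m ω) * η ω) t‖ ≤ C := by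
  obtain ⟨r, C, hC, hbound⟩ := exists_eLpNorm_fourier_comp_kCl_mul_le hm hη hη'
  refine ⟨((r ^ j * Real.exp (r * R)).toNNReal * C).toReal, fun x hx => ?_⟩
  have hentire := differentiable_spatialFactor j x
  have hcont : Continuous fun ω : ℝ => spatialFactor j x (kCl m ω) * η ω :=
    (hentire.continuous.comp (continuous_kCl_ofReal hm)).mul hη.continuous
  exact integrable_angularFourier_and_integral_norm_le
    (hcont.integrable_of_hasCompactSupport hη'.mul_left)
    (ENNReal.mul_ne_top ENNReal.coe_ne_top hC) (hbound _ _ hentire fun k hk =>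
      (norm_spatialFactor_le j hx hk).trans (Real.le_coe_toNNReal _))

theorem locallyLipschitz_mul {X A : Type*} [PseudoEMetricSpace X] [NormedRing A]
    [NormedAlgebra ℝ A] {f g : X → A} (hf : LocallyLipschitz f) (hg : LocallyLipschitz g) :
    LocallyLipschitz fun x => f x * g x :=
  (contDiff_mul (𝕜 := ℝ) (n := 1)).locallyLipschitz.comp (hf.prodMk hg)

theorem locallyLipschitz_neg_I_mul_pow (κ : ℕ) :
    LocallyLipschitz fun ω : ℝ => (-Complex.I * (ω : ℂ)) ^ κ :=
  ((contDiff_const.mul Complex.ofRealCLM.contDiff).pow κ : ContDiff ℝ 1 _).locallyLipschitz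

end Kernel

theorem multiplicator_kernels_uniform_L1_general
    (m : ℝ) (hm : 0 ≤ m)
    (ζ : ℝ → ℂ) (hζ : LocallyLipschitz ζ) (hζsupp : HasCompactSupport ζ)
    (j κt : ℕ)
    (Nch : ℝ → ℝ → ℂ)
    (hNch : ∀ x t : ℝ, Nch x t = ((1 / (2 * Real.pi) : ℝ) : ℂ)
      * ∫ ω : ℝ, (Complex.I * kCl m (ω:ℂ) * ((Real.sign x : ℝ) : ℂ))^j
          * Complex.exp (Complex.I * kCl m (ω:ℂ) * ((|x| : ℝ) : ℂ))
          * (-Complex.I * (ω:ℂ))^κt * ζ ω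
          * Complex.exp (-Complex.I * (ω:ℂ) * (t:ℂ))) :
    (∀ x : ℝ, Integrable (fun t => Nch x t) (volume : Measure ℝ)) ∧
    (∀ R : ℝ, ∃ C : ℝ, ∀ x : ℝ, |x| ≤ R → ∫ t : ℝ, ‖Nch x t‖ ≤ C) := by
  have hkernel (x : ℝ) : Nch x = angularFourier fun ω : ℝ =>
      spatialFactor j x (kCl m ω) * ((-Complex.I * (ω : ℂ)) ^ κt * ζ ω) := by
    funext t
    simp only [hNch, angularFourier, spatialFactor, mul_assoc]
  have hbound := exists_integral_norm_angularFourier_spatialFactor_le hm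
    (locallyLipschitz_mul (locallyLipschitz_neg_I_mul_pow κt) hζ) hζsupp.mul_left j
  simp only [← hkernel] at hbound
  refine ⟨fun x => ?_, fun R => ?_⟩
  · obtain ⟨_, hC⟩ := hbound |x|
    exact (hC x le_rfl).1
  · obtain ⟨C, hC⟩ := hbound R
    exact ⟨C, fun x hx => (hC x hx).2⟩

/-- the kernels
`Ň_x(t) = (1/2π)∫ (ik(ω) sgn x)^j e^{ik(ω)|x|} (−iω)^κ̃ ζ(ω) e^{−iωt} dω`
are in `L¹(ℝ)`, with `L¹`-norms bounded uniformly in `|x| ≤ R`. -/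
theorem multiplicator_kernels_uniform_L1
    (m : ℝ) (hm : 0 < m)
    (ζ : ℝ → ℂ) (hζ : ContDiff ℝ (⊤ : ℕ∞) ζ) (hζsupp : HasCompactSupport ζ)
    (j κt : ℕ)
    (Nch : ℝ → ℝ → ℂ)
    (hNch : ∀ x t : ℝ, Nch x t = ((1 / (2 * Real.pi) : ℝ) : ℂ)
      * ∫ ω : ℝ, (Complex.I * kCl m (ω:ℂ) * ((Real.sign x : ℝ) : ℂ))^j
          * Complex.exp (Complex.I * kCl m (ω:ℂ) * ((|x| : ℝ) : ℂ))
          * (-Complex.I * (ω:ℂ))^κt * ζ ω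
          * Complex.exp (-Complex.I * (ω:ℂ) * (t:ℂ))) :
    (∀ x : ℝ, Integrable (fun t => Nch x t) (volume : Measure ℝ)) ∧
    (∀ R : ℝ, 0 < R → ∃ C : ℝ, ∀ x : ℝ, |x| ≤ R →
      ∫ t : ℝ, ‖Nch x t‖ ≤ C) := by
  obtain ⟨hint, hbound⟩ := multiplicator_kernels_uniform_L1_general m hm.le ζ
    (contDiff_infty.1 hζ 1).locallyLipschitz hζsupp j κt Nch hNch
  exact ⟨hint, fun R _ => hbound R⟩
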